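/- Let (X,T) be a topological dynamical system given by a continuous ℤ^d-action on a compact metric space and let μ be an ergodic T-invariant Borel probability measure. If (X,T) is μ-mean equicontinuous, then for every Borel set B ⊆ X the system (X,T) is μ-1_B-mean equicontinuous, where 1_B is the indicator function of B. -/

import Mathlib

open MeasureTheory Filter Finset Metric
open scoped Classical

noncomputable section

/-- The box `{0,…,n−1}^d` inside `ℤ^d`. -/
def Fbox (d n : ℕ) : Finset (Fin d → ℤ) :=
  Fintype.piFinset fun _ => Finset.Icc (0 : ℤ) ((n : ℤ) - 1)

/-- Upper density of a subset of `ℤ^d` along the boxes `F_n`. -/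
def upperDensity (d : ℕ) (S : Set (Fin d → ℤ)) : ℝ :=
  Filter.limsup
    (fun n : ℕ => (((Fbox d n).filter (fun j => j ∈ S)).card : ℝ) / ((Fbox d n).card : ℝ))
    Filter.atTop

/-- Lower density of a subset of `ℤ^d` along the boxes `F_n`. -/
def lowerDensity (d : ℕ) (S : Set (Fin d → ℤ)) : ℝ :=
  Filter.liminf
    (fun n : ℕ => (((Fbox d n).filter (fun j => j ∈ S)).card : ℝ) / ((Fbox d n).card : ℝ))
    Filter.atTop

variable {X : Type*}

/-- The Besicovitch pseudometric `d_b(x,y) = limsup_n (1/|F_n|) Σ_{j∈F_n} d(T^j x, T^j y)`. -/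
def dB {d : ℕ} [PseudoMetricSpace X] (T : (Fin d → ℤ) → X → X) (x y : X) : ℝ :=
  Filter.limsup (fun n : ℕ =>
    (∑ j ∈ Fbox d n, dist (T j x) (T j y)) / ((Fbox d n).card : ℝ)) Filter.atTop

/-- The pseudometric `ρ_f(x,y) = inf {ε > 0 : D̄({i : |f(T^i x) − f(T^i y)| > ε}) < ε}`. -/
def rhoF {d : ℕ} (T : (Fin d → ℤ) → X → X) (f : X → ℂ) (x y : X) : ℝ :=
  sInf {ε : ℝ | 0 < ε ∧ upperDensity d {i | ε < ‖f (T i x) - f (T i y)‖} < ε}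

/-- `(X,T)` is `μ`-mean equicontinuous. -/
def MuMeanEquicont {d : ℕ} [MetricSpace X] [MeasurableSpace X] (μ : Measure X)
    (T : (Fin d → ℤ) → X → X) : Prop :=
  ∀ τ : ℝ, 0 < τ → ∃ M : Set X, IsCompact M ∧ 1 - ENNReal.ofReal τ ≤ μ M ∧
    ∀ ε : ℝ, 0 < ε → ∃ δ : ℝ, 0 < δ ∧
      ∀ x ∈ M, ∀ y ∈ M, dist x y ≤ δ → dB T x y ≤ ε

/-- `(X,T)` is `μ-f`-mean equicontinuous. -/
def MuFMeanEquicont {d : ℕ} [MetricSpace X] [MeasurableSpace X] (μ : Measure X)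
    (T : (Fin d → ℤ) → X → X) (f : X → ℂ) : Prop :=
  ∀ τ : ℝ, 0 < τ → ∃ M : Set X, IsCompact M ∧ 1 - ENNReal.ofReal τ ≤ μ M ∧
    ∀ ε : ℝ, 0 < ε → ∃ δ : ℝ, 0 < δ ∧
      ∀ x ∈ M, ∀ y ∈ M, dist x y ≤ δ → rhoF T f x y ≤ ε

/-!
Let `f : X → ℂ` be measurable. By Lusin's theorem `f` is uniformly continuous on a compact set `K`
of nearly full measure. Two orbits that stay close in mean and rarely leave `K` therefore have
`f`-values that are close outside a set of times of small upper density.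

That most orbits rarely leave `K` comes from the weak-type maximal inequality
`l * μ {x | sup_n |{j ∈ F_n : T^j x ∈ N}| / |F_n| > l} ≤ 6 ^ d * μ N` applied to `N = Kᶜ`. By the
transference principle this reduces to a Vitali covering of a subset of `ℤ^d` by translated boxes,
followed by integration over `x`. Mean equicontinuity enters only on the resulting set of good
points, where it bounds the upper density of the times at which two orbits are far apart; it also
supplies the tightness of `μ` that makes `K` compact.
-/

open scoped Pointwise NNReal ENNReal

section Boxes

variable {d : ℕ}

lemma mem_Fbox {n : ℕ} {j : Fin d → ℤ} : j ∈ Fbox d n ↔ ∀ k, 0 ≤ j k ∧ j k < n := by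
  simp only [Fbox, Fintype.mem_piFinset, Finset.mem_Icc, Int.le_sub_one_iff]

lemma card_Fbox (d n : ℕ) : #(Fbox d n) = n ^ d := by
  simp [Fbox]

lemma mem_vadd_Fbox {n : ℕ} {i j : Fin d → ℤ} :
    j ∈ i +ᵥ Fbox d n ↔ ∀ k, i k ≤ j k ∧ j k < i k + n := by
  rw [← Finset.neg_vadd_mem_iff, mem_Fbox]
  refine forall_congr' fun k => ?_
  simp only [vadd_eq_add, Pi.add_apply, Pi.neg_apply]
  omega

lemma vadd_Fbox_subset_Fbox_two_mul {n K : ℕ} {i : Fin d → ℤ} (hn : n ≤ K) (hi : i ∈ Fbox d K) :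
    i +ᵥ Fbox d n ⊆ Fbox d (2 * K) := by
  intro j hj
  refine mem_Fbox.2 fun k => ?_
  have := mem_vadd_Fbox.1 hj k
  have := mem_Fbox.1 hi k
  omega

lemma card_filter_vadd (i : Fin d → ℤ) (F : Finset (Fin d → ℤ)) (S : Set (Fin d → ℤ)) :
    #{j ∈ i +ᵥ F | j ∈ S} = #{j ∈ F | j + i ∈ S} := by
  rw [← Finset.image_vadd, Finset.filter_image,
    Finset.card_image_of_injective _ (AddAction.injective i)]
  simp only [vadd_eq_add, add_comm i]

lemma exists_pairwiseDisjoint_vadd_Fbox (A : Finset (Fin d → ℤ)) (n : (Fin d → ℤ) → ℕ)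
    (hn : ∀ i ∈ A, (Fbox d (n i)).Nonempty) :
    ∃ U ⊆ A, (U : Set (Fin d → ℤ)).PairwiseDisjoint (fun i => i +ᵥ Fbox d (n i)) ∧
      #A ≤ 3 ^ d * ∑ i ∈ U, #(Fbox d (n i)) := by
  obtain ⟨u, huA, hdisj, hcover⟩ := Vitali.exists_disjoint_subfamily_covering_enlargement
    (fun i => ((i +ᵥ Fbox d (n i) : Finset (Fin d → ℤ)) : Set (Fin d → ℤ))) A
    (fun i => (n i : ℝ)) 2 one_lt_two (fun _ _ => Nat.cast_nonneg _) (A.sup n : ℕ)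
    (fun i hi => Nat.cast_le.2 (Finset.le_sup hi))
    (fun i hi => Finset.coe_nonempty.2 (hn i hi).vadd_finset)
  lift u to Finset (Fin d → ℤ) using A.finite_toSet.subset huA
  let enlarged (b : Fin d → ℤ) : Finset (Fin d → ℤ) :=
    Fintype.piFinset fun k => Finset.Ico (b k - 2 * n b) (b k + n b)
  have card_enlarged (b : Fin d → ℤ) : #(enlarged b) = 3 ^ d * #(Fbox d (n b)) := by
    have side (k : Fin d) : #(Finset.Ico (b k - 2 * n b) (b k + n b)) = 3 * n b := by
      rw [Int.card_Ico]
      omega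
    simp [enlarged, side, card_Fbox, mul_pow]
  have subset_enlarged : A ⊆ u.biUnion enlarged := by
    intro a ha
    obtain ⟨b, hb, ⟨j, hja, hjb⟩, hab⟩ := hcover a ha
    refine Finset.mem_biUnion.2 ⟨b, hb, Fintype.mem_piFinset.2 fun k => Finset.mem_Ico.2 ?_⟩
    have := mem_vadd_Fbox.1 hja k
    have := mem_vadd_Fbox.1 hjb k
    have : n a ≤ 2 * n b := mod_cast hab
    omega
  refine ⟨u, Finset.coe_subset.1 huA, fun a ha b hb hab => ?_, ?_⟩
  · exact Finset.disjoint_coe.1 (hdisj ha hb hab)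
  · calc #A ≤ ∑ b ∈ u, #(enlarged b) :=
          (Finset.card_le_card subset_enlarged).trans Finset.card_biUnion_le
      _ = 3 ^ d * ∑ b ∈ u, #(Fbox d (n b)) := by simp only [card_enlarged, Finset.mul_sum]

end Boxes

section Density

variable {d : ℕ}

/-- The proportion of the box `F_n` occupied by `S`, whose upper limit is `D̄(S)`. It is `0` when
the box is empty. -/
def boxFreq (d n : ℕ) (S : Set (Fin d → ℤ)) : ℝ :=
  #{j ∈ Fbox d n | j ∈ S} / #(Fbox d n)

lemma boxFreq_nonneg (n : ℕ) (S : Set (Fin d → ℤ)) : 0 ≤ boxFreq d n S := by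
  unfold boxFreq
  positivity

lemma boxFreq_le_one (n : ℕ) (S : Set (Fin d → ℤ)) : boxFreq d n S ≤ 1 :=
  div_le_one_of_le₀ (mod_cast Finset.card_filter_le _ _) (Nat.cast_nonneg _)

lemma boxFreq_mono (n : ℕ) {S S' : Set (Fin d → ℤ)} (h : S ⊆ S') :
    boxFreq d n S ≤ boxFreq d n S' := by
  unfold boxFreq
  gcongr

lemma boxFreq_union_le (n : ℕ) (S S' : Set (Fin d → ℤ)) :
    boxFreq d n (S ∪ S') ≤ boxFreq d n S + boxFreq d n S' := by
  unfold boxFreq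
  rw [← add_div]
  gcongr
  simp only [Set.mem_union, Finset.filter_or]
  exact mod_cast Finset.card_union_le _ _

lemma nonempty_Fbox_of_boxFreq_pos {n : ℕ} {S : Set (Fin d → ℤ)} (h : 0 < boxFreq d n S) :
    (Fbox d n).Nonempty := by
  by_contra hempty
  simp [boxFreq, Finset.not_nonempty_iff_eq_empty.1 hempty] at h

lemma isBoundedUnder_le_boxFreq (S : Set (Fin d → ℤ)) :
    IsBoundedUnder (· ≤ ·) atTop fun n => boxFreq d n S :=
  isBoundedUnder_of ⟨1, fun n => boxFreq_le_one n S⟩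

lemma isBoundedUnder_ge_boxFreq (S : Set (Fin d → ℤ)) :
    IsBoundedUnder (· ≥ ·) atTop fun n => boxFreq d n S :=
  isBoundedUnder_of ⟨0, fun n => boxFreq_nonneg n S⟩

lemma upperDensity_le_of_forall_boxFreq_le {S : Set (Fin d → ℤ)} {l : ℝ}
    (h : ∀ n, boxFreq d n S ≤ l) : upperDensity d S ≤ l :=
  limsup_le_of_le (isBoundedUnder_ge_boxFreq S).isCoboundedUnder_le (Eventually.of_forall h)

lemma upperDensity_mono {S S' : Set (Fin d → ℤ)} (h : S ⊆ S') :
    upperDensity d S ≤ upperDensity d S' :=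
  limsup_le_limsup (Eventually.of_forall fun n => boxFreq_mono n h)
    (isBoundedUnder_ge_boxFreq S).isCoboundedUnder_le (isBoundedUnder_le_boxFreq S')

lemma upperDensity_union_le (S S' : Set (Fin d → ℤ)) :
    upperDensity d (S ∪ S') ≤ upperDensity d S + upperDensity d S' := by
  have hS := isBoundedUnder_le_boxFreq S
  have hS' := isBoundedUnder_le_boxFreq S'
  calc upperDensity d (S ∪ S')
      ≤ limsup ((fun n => boxFreq d n S) + fun n => boxFreq d n S') atTop :=
        limsup_le_limsup (Eventually.of_forall fun n => boxFreq_union_le n S S')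
          (isBoundedUnder_ge_boxFreq _).isCoboundedUnder_le (isBoundedUnder_le_add hS hS')
    _ ≤ upperDensity d S + upperDensity d S' :=
        limsup_add_le (isBoundedUnder_ge_boxFreq S) hS
          (isBoundedUnder_ge_boxFreq S').isCoboundedUnder_le hS'

end Density

section Besicovitch

variable {d : ℕ} {T : (Fin d → ℤ) → X → X} {x y : X}

lemma mul_boxFreq_le_average {g : (Fin d → ℤ) → ℝ} (hg : ∀ j, 0 ≤ g j) (r : ℝ) (n : ℕ) :
    r * boxFreq d n {j | r ≤ g j} ≤ (∑ j ∈ Fbox d n, g j) / #(Fbox d n) := by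
  rw [boxFreq, ← mul_div_assoc]
  gcongr
  calc r * #{j ∈ Fbox d n | j ∈ {j | r ≤ g j}} = #{j ∈ Fbox d n | r ≤ g j} • r := by
        simp [mul_comm]
    _ ≤ ∑ j ∈ Fbox d n with r ≤ g j, g j :=
        Finset.card_nsmul_le_sum _ _ _ fun j hj => (Finset.mem_filter.1 hj).2
    _ ≤ ∑ j ∈ Fbox d n, g j :=
        Finset.sum_le_sum_of_subset_of_nonneg (Finset.filter_subset _ _) fun j _ _ => hg j

lemma isBoundedUnder_le_average_dist [PseudoMetricSpace X] [BoundedSpace X]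
    (T : (Fin d → ℤ) → X → X) (x y : X) :
    IsBoundedUnder (· ≤ ·) atTop
      fun n => (∑ j ∈ Fbox d n, dist (T j x) (T j y)) / (#(Fbox d n) : ℝ) := by
  refine isBoundedUnder_of ⟨diam (Set.univ : Set X), fun n => ?_⟩
  refine div_le_of_le_mul₀ (Nat.cast_nonneg _) diam_nonneg ?_
  rw [mul_comm, ← nsmul_eq_mul]
  exact Finset.sum_le_card_nsmul _ _ _ fun j _ =>
    dist_le_diam_of_mem (Bornology.IsBounded.all _) (Set.mem_univ _) (Set.mem_univ _)

lemma mul_upperDensity_le_dB [PseudoMetricSpace X] [BoundedSpace X]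
    (T : (Fin d → ℤ) → X → X) (x y : X) {r : ℝ} (hr : 0 < r) :
    r * upperDensity d {j | r ≤ dist (T j x) (T j y)} ≤ dB T x y := by
  set S := {j | r ≤ dist (T j x) (T j y)}
  have hbdd : IsBoundedUnder (· ≤ ·) atTop fun n => r * boxFreq d n S :=
    isBoundedUnder_of ⟨r, fun n => mul_le_of_le_one_right hr.le (boxFreq_le_one n S)⟩
  have hcobdd : IsCoboundedUnder (· ≤ ·) atTop fun n => r * boxFreq d n S :=
    IsBoundedUnder.isCoboundedUnder_le
      (isBoundedUnder_of ⟨0, fun n => mul_nonneg hr.le (boxFreq_nonneg n S)⟩)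
  calc r * upperDensity d S = limsup (fun n => r * boxFreq d n S) atTop :=
        (OrderIso.mulLeft₀ r hr).limsup_apply (isBoundedUnder_le_boxFreq S)
          (isBoundedUnder_ge_boxFreq S).isCoboundedUnder_le hbdd hcobdd
    _ ≤ dB T x y :=
        limsup_le_limsup
          (Eventually.of_forall fun n => mul_boxFreq_le_average (fun _ => dist_nonneg) r n)
          hcobdd (isBoundedUnder_le_average_dist T x y)

lemma rhoF_le_of_upperDensity_lt {f : X → ℂ} {ε : ℝ} (hε : 0 < ε)
    (h : upperDensity d {i | ε < ‖f (T i x) - f (T i y)‖} < ε) : rhoF T f x y ≤ ε :=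
  csInf_le ⟨0, fun _ hz => hz.1.le⟩ ⟨hε, h⟩

lemma rhoF_le_of_dB_le [PseudoMetricSpace X] [BoundedSpace X] {f : X → ℂ} {K : Set X} {r ε : ℝ}
    (hr : 0 < r) (hε : 0 < ε)
    (hf : ∀ a ∈ K, ∀ b ∈ K, dist a b < r → dist (f a) (f b) < ε)
    (hx : upperDensity d {j | T j x ∈ Kᶜ} ≤ ε / 4) (hy : upperDensity d {j | T j y ∈ Kᶜ} ≤ ε / 4)
    (hxy : dB T x y ≤ r * (ε / 4)) : rhoF T f x y ≤ ε := by
  have hfar : upperDensity d {j | r ≤ dist (T j x) (T j y)} ≤ ε / 4 :=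
    le_of_mul_le_mul_left ((mul_upperDensity_le_dB T x y hr).trans hxy) hr
  have hsub : {j | ε < ‖f (T j x) - f (T j y)‖} ⊆
      {j | T j x ∈ Kᶜ} ∪ {j | T j y ∈ Kᶜ} ∪ {j | r ≤ dist (T j x) (T j y)} := by
    intro j hj
    by_contra! hclose
    simp only [Set.mem_union, Set.mem_ofPred_eq, Set.mem_compl_iff, not_or, not_not, not_le]
      at hclose hj
    rw [← dist_eq_norm] at hj
    exact hj.not_gt (hf _ hclose.1.1 _ hclose.1.2 hclose.2)
  refine rhoF_le_of_upperDensity_lt hε ?_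
  calc upperDensity d {j | ε < ‖f (T j x) - f (T j y)‖}
      ≤ upperDensity d {j | T j x ∈ Kᶜ} + upperDensity d {j | T j y ∈ Kᶜ} +
          upperDensity d {j | r ≤ dist (T j x) (T j y)} :=
        (upperDensity_mono hsub).trans <| (upperDensity_union_le _ _).trans <|
          add_le_add_left (upperDensity_union_le _ _) _
    _ < ε := by linarith

end Besicovitch

section MaximalInequality

variable {d : ℕ}

lemma mul_card_le_of_lt_boxFreq {S : Set (Fin d → ℤ)} {l : ℝ≥0} {K : ℕ} {A : Finset (Fin d → ℤ)}
    (hA : A ⊆ Fbox d K) {n : (Fin d → ℤ) → ℕ} (hn : ∀ i ∈ A, n i ≤ K)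
    (hl : ∀ i ∈ A, l < boxFreq d (n i) {j | j + i ∈ S}) :
    l * (#A : ℝ) ≤ 3 ^ d * #{j ∈ Fbox d (2 * K) | j ∈ S} := by
  have hbox : ∀ i ∈ A, (Fbox d (n i)).Nonempty := fun i hi =>
    nonempty_Fbox_of_boxFreq_pos (l.coe_nonneg.trans_lt (hl i hi))
  obtain ⟨U, hUA, hdisj, hcard⟩ := exists_pairwiseDisjoint_vadd_Fbox A n hbox
  have hvisits : ∀ i ∈ U, l * (#(Fbox d (n i)) : ℝ) ≤ #{j ∈ i +ᵥ Fbox d (n i) | j ∈ S} := by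
    intro i hi
    rw [card_filter_vadd]
    exact ((lt_div_iff₀ (mod_cast (hbox i (hUA hi)).card_pos)).1 (hl i (hUA hi))).le
  have hunion : ∑ i ∈ U, #{j ∈ i +ᵥ Fbox d (n i) | j ∈ S} ≤ #{j ∈ Fbox d (2 * K) | j ∈ S} := by
    rw [← Finset.card_biUnion fun i hi k hk hik =>
      Finset.disjoint_filter_filter (hdisj hi hk hik)]
    refine Finset.card_le_card (Finset.biUnion_subset.2 fun i hi => ?_)
    exact Finset.filter_subset_filter _
      (vadd_Fbox_subset_Fbox_two_mul (hn i (hUA hi)) (hA (hUA hi)))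
  calc l * (#A : ℝ) ≤ l * (3 ^ d * ∑ i ∈ U, (#(Fbox d (n i)) : ℝ)) := by
        gcongr
        exact mod_cast hcard
    _ = 3 ^ d * ∑ i ∈ U, l * (#(Fbox d (n i)) : ℝ) := by rw [mul_left_comm, Finset.mul_sum]
    _ ≤ 3 ^ d * ∑ i ∈ U, (#{j ∈ i +ᵥ Fbox d (n i) | j ∈ S} : ℝ) := by
        gcongr with i hi
        exact hvisits i hi
    _ ≤ 3 ^ d * #{j ∈ Fbox d (2 * K) | j ∈ S} := by
        gcongr
        exact mod_cast hunion

/-- The points whose orbit visits `N` with frequency greater than `l` in one of the boxes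
`F_0, …, F_K`, that is, the set where the maximal function of `1_N`, truncated at scale `K`,
exceeds `l`. -/
def frequentVisitors (T : (Fin d → ℤ) → X → X) (N : Set X) (l : ℝ≥0) (K : ℕ) : Set X :=
  {x | ∃ n ≤ K, l < boxFreq d n {j | T j x ∈ N}}

lemma frequentVisitors_mono (T : (Fin d → ℤ) → X → X) (N : Set X) (l : ℝ≥0) :
    Monotone (frequentVisitors T N l) :=
  fun _ _ hKL _ ⟨n, hn, hl⟩ => ⟨n, hn.trans hKL, hl⟩

lemma boxFreq_le_of_notMem_iUnion_frequentVisitors {T : (Fin d → ℤ) → X → X} {N : Set X}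
    {l : ℝ≥0} {x : X} (hx : x ∉ ⋃ K, frequentVisitors T N l K) (n : ℕ) :
    boxFreq d n {j | T j x ∈ N} ≤ l :=
  not_lt.1 fun hlt => hx (Set.mem_iUnion.2 ⟨n, n, le_rfl, hlt⟩)

lemma mul_card_frequentVisitors_le {T : (Fin d → ℤ) → X → X}
    (hTadd : ∀ i j, T (i + j) = T i ∘ T j) (N : Set X) (l : ℝ≥0) (K : ℕ) (x : X) :
    l * (#{i ∈ Fbox d K | T i x ∈ frequentVisitors T N l K} : ℝ) ≤
      3 ^ d * #{j ∈ Fbox d (2 * K) | T j x ∈ N} := by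
  have hscale : ∀ i ∈ {i ∈ Fbox d K | T i x ∈ frequentVisitors T N l K},
      ∃ n ≤ K, l < boxFreq d n {j | j + i ∈ {j | T j x ∈ N}} := by
    intro i hi
    obtain ⟨n, hn, hl⟩ := (Finset.mem_filter.1 hi).2
    exact ⟨n, hn, by simpa only [Set.mem_ofPred_eq, hTadd, Function.comp_apply] using hl⟩
  choose! n hn hl using hscale
  exact mul_card_le_of_lt_boxFreq (Finset.filter_subset _ _) hn hl

variable [MeasurableSpace X]

lemma measurable_card_filter_mem {ι R : Type*} [AddCommMonoidWithOne R]
    [MeasurableSpace R] [MeasurableAdd₂ R] {T : ι → X → X} (hT : ∀ j, Measurable (T j)) {N : Set X}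
    (hN : MeasurableSet N) (F : Finset ι) :
    Measurable fun x => (#{j ∈ F | T j x ∈ N} : R) := by
  simp only [Finset.natCast_card_filter]
  exact Finset.measurable_fun_sum F fun j _ =>
    Measurable.ite (hT j hN) measurable_const measurable_const

lemma measurableSet_frequentVisitors {T : (Fin d → ℤ) → X → X} (hT : ∀ j, Measurable (T j))
    {N : Set X} (hN : MeasurableSet N) (l : ℝ≥0) (K : ℕ) :
    MeasurableSet (frequentVisitors T N l K) := by
  simp only [frequentVisitors, Set.ofPred_exists, Set.ofPred_and]
  refine MeasurableSet.iUnion fun n => (MeasurableSet.const _).inter ?_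
  exact measurableSet_lt measurable_const
    ((measurable_card_filter_mem hT hN (Fbox d n)).div_const _)

lemma lintegral_card_filter_mem {ι : Type*} {T : ι → X → X} {μ : Measure X}
    (hT : ∀ j, MeasurePreserving (T j) μ μ) {N : Set X} (hN : MeasurableSet N) (F : Finset ι) :
    ∫⁻ x, #{j ∈ F | T j x ∈ N} ∂μ = #F * μ N := by
  have hmeas (j : ι) : MeasurableSet (T j ⁻¹' N) := (hT j).measurable hN
  calc ∫⁻ x, #{j ∈ F | T j x ∈ N} ∂μ
      = ∫⁻ x, ∑ j ∈ F, (T j ⁻¹' N).indicator 1 x ∂μ := by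
        simp only [Finset.natCast_card_filter, Set.indicator_apply, Set.mem_preimage,
          Pi.one_apply]
    _ = ∑ j ∈ F, μ (T j ⁻¹' N) := by
        rw [lintegral_finsetSum F fun j _ => measurable_one.indicator (hmeas j)]
        simp only [lintegral_indicator_one (hmeas _)]
    _ = #F * μ N := by
        simp only [(hT _).measure_preimage hN.nullMeasurableSet, Finset.sum_const, nsmul_eq_mul]

variable {T : (Fin d → ℤ) → X → X} {μ : Measure X} {N : Set X}

lemma mul_measure_frequentVisitors_le (hTadd : ∀ i j, T (i + j) = T i ∘ T j)
    (hT : ∀ j, MeasurePreserving (T j) μ μ) (hN : MeasurableSet N) (l : ℝ≥0) {K : ℕ}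
    (hK : K ≠ 0) : l * μ (frequentVisitors T N l K) ≤ 6 ^ d * μ N := by
  have hmeas (j) : Measurable (T j) := (hT j).measurable
  have hE := measurableSet_frequentVisitors hmeas hN l K
  have hpoint (x : X) : (l : ℝ≥0∞) * #{i ∈ Fbox d K | T i x ∈ frequentVisitors T N l K} ≤
      3 ^ d * #{j ∈ Fbox d (2 * K) | T j x ∈ N} :=
    mod_cast mul_card_frequentVisitors_le hTadd N l K x
  have hintegral := lintegral_mono (μ := μ) hpoint
  rw [lintegral_const_mul _ (measurable_card_filter_mem hmeas hE _),
    lintegral_const_mul _ (measurable_card_filter_mem hmeas hN _),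
    lintegral_card_filter_mem hT hE, lintegral_card_filter_mem hT hN,
    card_Fbox, card_Fbox] at hintegral
  have hKd : ((K ^ d : ℕ) : ℝ≥0∞) ≠ 0 := mod_cast pow_ne_zero d hK
  refine (ENNReal.mul_le_mul_iff_right hKd (ENNReal.natCast_ne_top _)).1 ?_
  calc ((K ^ d : ℕ) : ℝ≥0∞) * (l * μ (frequentVisitors T N l K))
      = l * ((K ^ d : ℕ) * μ (frequentVisitors T N l K)) := mul_left_comm _ _ _
    _ ≤ 3 ^ d * (((2 * K) ^ d : ℕ) * μ N) := hintegral
    _ = (K ^ d : ℕ) * (6 ^ d * μ N) := by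
        rw [show (6 : ℝ≥0∞) = 3 * 2 by norm_num, mul_pow, mul_pow]
        push_cast
        ring

lemma mul_measure_iUnion_frequentVisitors_le (hTadd : ∀ i j, T (i + j) = T i ∘ T j)
    (hT : ∀ j, MeasurePreserving (T j) μ μ) (hN : MeasurableSet N) (l : ℝ≥0) :
    l * μ (⋃ K, frequentVisitors T N l K) ≤ 6 ^ d * μ N := by
  have hmono := frequentVisitors_mono T N l
  rw [hmono.measure_iUnion, ENNReal.mul_iSup]
  refine iSup_le fun K => ?_
  calc l * μ (frequentVisitors T N l K) ≤ l * μ (frequentVisitors T N l (K + 1)) := by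
        gcongr
        exact hmono K.le_succ
    _ ≤ 6 ^ d * μ N := mul_measure_frequentVisitors_le hTadd hT hN l K.succ_ne_zero

end MaximalInequality

section Lusin

variable [TopologicalSpace X] [MeasurableSpace X] [OpensMeasurableSpace X]

lemma exists_isCompact_subset_diff_measure_compl_le [T2Space X] (μ : Measure X)
    [IsFiniteMeasure μ] [μ.WeaklyRegular] {M Z : Set X}
    (hM : IsCompact M) (hZ : MeasurableSet Z) {ε : ℝ≥0∞} (hε : ε ≠ 0) :
    ∃ K ⊆ M \ Z, IsCompact K ∧ μ Kᶜ ≤ μ Mᶜ + μ Z + ε := by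
  obtain ⟨K, hKM, hK, hμK⟩ :=
    (hM.measurableSet.diff hZ).exists_isClosed_sdiff_lt (measure_ne_top μ _) hε
  refine ⟨K, hKM, hM.of_isClosed_subset hK (hKM.trans Set.sdiff_subset), ?_⟩
  have hcompl : Kᶜ ⊆ Mᶜ ∪ Z ∪ ((M \ Z) \ K) := by
    grind
  calc μ Kᶜ ≤ μ Mᶜ + μ Z + μ ((M \ Z) \ K) :=
        (measure_mono hcompl).trans <| (measure_union_le _ _).trans <|
          add_le_add_left (measure_union_le _ _) _
    _ ≤ μ Mᶜ + μ Z + ε := by gcongr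

lemma exists_isClosed_inter_preimage_eq {Y : Type*} [MeasurableSpace Y] {f : X → Y}
    (hf : Measurable f) (μ : Measure X) [IsFiniteMeasure μ] [μ.WeaklyRegular]
    {U : Set Y} (hU : MeasurableSet U) {ε : ℝ≥0∞} (hε : ε ≠ 0) :
    ∃ C, IsClosed C ∧ μ Cᶜ ≤ ε ∧ ∃ V, IsOpen V ∧ f ⁻¹' U ∩ C = V ∩ C := by
  have hε2 : ε / 2 ≠ 0 := (ENNReal.half_pos hε).ne'
  obtain ⟨F, hFU, hF, hμF⟩ := (hf hU).exists_isClosed_sdiff_lt (measure_ne_top μ _) hε2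
  obtain ⟨G, hGU, hG, hμG⟩ := (hf hU.compl).exists_isClosed_sdiff_lt (measure_ne_top μ _) hε2
  refine ⟨F ∪ G, hF.union hG, ?_, Gᶜ, hG.isOpen_compl, ?_⟩
  · have hcompl : (F ∪ G)ᶜ ⊆ (f ⁻¹' U \ F) ∪ (f ⁻¹' Uᶜ \ G) := by
      grind
    calc μ (F ∪ G)ᶜ ≤ μ (f ⁻¹' U \ F) + μ (f ⁻¹' Uᶜ \ G) :=
          (measure_mono hcompl).trans (measure_union_le _ _)
      _ ≤ ε / 2 + ε / 2 := add_le_add hμF.le hμG.le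
      _ = ε := ENNReal.add_halves ε
  · ext x
    have hxF := @hFU x
    have hxG := @hGU x
    grind

variable {Y : Type*} [TopologicalSpace Y] [SecondCountableTopology Y] [MeasurableSpace Y]
  [OpensMeasurableSpace Y] {f : X → Y}

theorem exists_isClosed_continuousOn_measure_compl_le (hf : Measurable f)
    (μ : Measure X) [IsFiniteMeasure μ] [μ.WeaklyRegular] {ε : ℝ≥0∞} (hε : ε ≠ 0) :
    ∃ C, IsClosed C ∧ ContinuousOn f C ∧ μ Cᶜ ≤ ε := by
  have hbasis := TopologicalSpace.isBasis_countableBasis Y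
  obtain ⟨η, hη, hsum⟩ := ENNReal.exists_pos_sum_of_countable' hε
    (TopologicalSpace.countableBasis Y)
  choose C hC hμC V hV hVC using fun U : TopologicalSpace.countableBasis Y =>
    exists_isClosed_inter_preimage_eq hf μ (hbasis.isOpen U.2).measurableSet (hη U).ne'
  refine ⟨⋂ U, C U, isClosed_iInter hC, ?_, ?_⟩
  · rw [continuousOn_iff_continuous_domRestrict, hbasis.continuous_iff]
    intro U hU
    refine ⟨V ⟨U, hU⟩, hV _, ?_⟩
    ext ⟨x, hx⟩
    have hxC : x ∈ C ⟨U, hU⟩ := Set.mem_iInter.1 hx _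
    simpa [hxC] using (Set.ext_iff.1 (hVC ⟨U, hU⟩) x).symm
  · calc μ (⋂ U, C U)ᶜ = μ (⋃ U, (C U)ᶜ) := by rw [Set.compl_iInter]
      _ ≤ ∑' U, μ (C U)ᶜ := measure_iUnion_le _
      _ ≤ ∑' U, η U := ENNReal.tsum_le_tsum hμC
      _ ≤ ε := hsum.le

theorem exists_isCompact_continuousOn_measure_compl_le (hf : Measurable f)
    {μ : Measure X} [IsFiniteMeasure μ] [μ.WeaklyRegular] (hμ : IsTightMeasureSet {μ})
    {ε : ℝ≥0∞} (hε : ε ≠ 0) :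
    ∃ K, IsCompact K ∧ ContinuousOn f K ∧ μ Kᶜ ≤ ε := by
  have hε2 : 0 < ε / 2 := ENNReal.half_pos hε
  obtain ⟨C, hC, hfC, hμC⟩ := exists_isClosed_continuousOn_measure_compl_le hf μ hε2.ne'
  obtain ⟨L, hL, hμL⟩ :=
    isTightMeasureSet_iff_exists_isCompact_measure_compl_le.1 hμ (ε / 2) hε2
  refine ⟨L ∩ C, hL.inter_right hC, hfC.mono Set.inter_subset_right, ?_⟩
  calc μ (L ∩ C)ᶜ ≤ μ Lᶜ + μ Cᶜ := by
        rw [Set.compl_inter]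
        exact measure_union_le _ _
    _ ≤ ε / 2 + ε / 2 := add_le_add (hμL μ rfl) hμC
    _ = ε := ENNReal.add_halves ε

variable [T2Space X] {d : ℕ} {T : (Fin d → ℤ) → X → X} {μ : Measure X} [IsFiniteMeasure μ]
  [μ.WeaklyRegular]

lemma exists_isCompact_continuousOn_measure_frequentVisitors_le
    (hTadd : ∀ i j, T (i + j) = T i ∘ T j) (hT : ∀ j, MeasurePreserving (T j) μ μ)
    (hμ : IsTightMeasureSet {μ}) (hf : Measurable f) {l : ℝ≥0} (hl : l ≠ 0)
    {ε : ℝ≥0∞} (hε : ε ≠ 0) :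
    ∃ K, IsCompact K ∧ ContinuousOn f K ∧ μ (⋃ n, frequentVisitors T Kᶜ l n) ≤ ε := by
  have hl' : (l : ℝ≥0∞) ≠ 0 := mod_cast hl
  have h6 : (6 : ℝ≥0∞) ^ d ≠ 0 := by positivity
  have h6' : (6 : ℝ≥0∞) ^ d ≠ ⊤ := ENNReal.pow_ne_top (by norm_num)
  obtain ⟨K, hK, hfK, hμK⟩ := exists_isCompact_continuousOn_measure_compl_le hf hμ
    (ENNReal.div_ne_zero.2 ⟨mul_ne_zero hl' hε, h6'⟩)
  refine ⟨K, hK, hfK, (ENNReal.mul_le_mul_iff_right hl' ENNReal.coe_ne_top).1 ?_⟩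
  calc l * μ (⋃ n, frequentVisitors T Kᶜ l n) ≤ 6 ^ d * μ Kᶜ :=
        mul_measure_iUnion_frequentVisitors_le hTadd hT hK.measurableSet.compl l
    _ ≤ 6 ^ d * (l * ε / 6 ^ d) := by gcongr
    _ = l * ε := ENNReal.mul_div_cancel h6 h6'

lemma exists_measurableSet_forall_upperDensity_compl_le (hTadd : ∀ i j, T (i + j) = T i ∘ T j)
    (hT : ∀ j, MeasurePreserving (T j) μ μ) (hμ : IsTightMeasureSet {μ}) (hf : Measurable f)
    {δ : ℝ≥0∞} (hδ : δ ≠ 0) :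
    ∃ Z, MeasurableSet Z ∧ μ Z ≤ δ ∧ ∀ ε : ℝ, 0 < ε →
      ∃ K, IsCompact K ∧ ContinuousOn f K ∧ ∀ x ∉ Z, upperDensity d {j | T j x ∈ Kᶜ} ≤ ε := by
  obtain ⟨η, hη, hsum⟩ := ENNReal.exists_pos_sum_of_countable' hδ ℕ
  let l (k : ℕ) : ℝ≥0 := 1 / (k + 1)
  have hl (k : ℕ) : l k ≠ 0 := by positivity
  choose K hK hfK hμK using fun k =>
    exists_isCompact_continuousOn_measure_frequentVisitors_le hTadd hT hμ hf (hl k) (hη k).ne'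
  refine ⟨⋃ k, ⋃ n, frequentVisitors T (K k)ᶜ (l k) n, ?_, ?_, fun ε hε => ?_⟩
  · exact MeasurableSet.iUnion fun k => MeasurableSet.iUnion fun n =>
      measurableSet_frequentVisitors (fun j => (hT j).measurable) (hK k).measurableSet.compl _ n
  · exact (measure_iUnion_le _).trans ((ENNReal.tsum_le_tsum hμK).trans hsum.le)
  · obtain ⟨k, hk⟩ := exists_nat_one_div_lt hε
    refine ⟨K k, hK k, hfK k, fun x hx => ?_⟩
    have hxk := fun hmem => hx (Set.mem_iUnion.2 ⟨k, hmem⟩)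
    calc upperDensity d {j | T j x ∈ (K k)ᶜ} ≤ l k :=
          upperDensity_le_of_forall_boxFreq_le
            (boxFreq_le_of_notMem_iUnion_frequentVisitors hxk)
      _ ≤ ε := by simpa [l] using hk.le

end Lusin

section MeanEquicontinuity

variable {d : ℕ} [MeasurableSpace X]

lemma one_sub_le_prob_iff {μ : Measure X} [IsProbabilityMeasure μ] {s : Set X}
    (hs : MeasurableSet s) {ε : ℝ≥0∞} : 1 - ε ≤ μ s ↔ μ sᶜ ≤ ε := by
  rw [prob_compl_eq_one_sub hs, tsub_le_iff_tsub_le]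

variable [MetricSpace X] {μ : Measure X} [IsProbabilityMeasure μ] {T : (Fin d → ℤ) → X → X}

lemma MuMeanEquicont.isTightMeasureSet [OpensMeasurableSpace X]
    (hm : MuMeanEquicont μ T) : IsTightMeasureSet {μ} := by
  refine isTightMeasureSet_iff_exists_isCompact_measure_compl_le.2 fun ε hε => ?_
  obtain ⟨τ, hτ, hτε⟩ := ENNReal.lt_iff_exists_nnreal_btwn.1 hε
  obtain ⟨M, hM, hμM, -⟩ := hm τ (mod_cast hτ)
  rw [ENNReal.ofReal_coe_nnreal, one_sub_le_prob_iff hM.measurableSet] at hμM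
  exact ⟨M, hM, by rintro _ rfl; exact hμM.trans hτε.le⟩

lemma MuMeanEquicont.exists_isCompact_disjoint [BorelSpace X] (hm : MuMeanEquicont μ T) {τ : ℝ}
    (hτ : 0 < τ) {Z : Set X} (hZ : MeasurableSet Z) (hμZ : μ Z ≤ ENNReal.ofReal (τ / 2)) :
    ∃ M, IsCompact M ∧ Disjoint M Z ∧ 1 - ENNReal.ofReal τ ≤ μ M ∧
      ∀ ε : ℝ, 0 < ε → ∃ δ : ℝ, 0 < δ ∧ ∀ x ∈ M, ∀ y ∈ M, dist x y ≤ δ → dB T x y ≤ ε := by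
  have hτ4 : 0 < τ / 4 := by positivity
  obtain ⟨M₀, hM₀, hμM₀, hequi⟩ := hm (τ / 4) hτ4
  rw [one_sub_le_prob_iff hM₀.measurableSet] at hμM₀
  obtain ⟨M, hMsub, hM, hμM⟩ := exists_isCompact_subset_diff_measure_compl_le μ hM₀ hZ
    (ENNReal.ofReal_pos.2 hτ4).ne'
  obtain ⟨hMM₀, hMZ⟩ := Set.subset_sdiff.1 hMsub
  refine ⟨M, hM, hMZ, (one_sub_le_prob_iff hM.measurableSet).2 ?_, fun ε hε => ?_⟩
  · calc μ Mᶜ ≤ μ M₀ᶜ + μ Z + ENNReal.ofReal (τ / 4) := hμM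
      _ ≤ ENNReal.ofReal (τ / 4) + ENNReal.ofReal (τ / 2) + ENNReal.ofReal (τ / 4) := by gcongr
      _ = ENNReal.ofReal τ := by
          rw [← ENNReal.ofReal_add, ← ENNReal.ofReal_add]
          · congr 1
            ring
          all_goals positivity
  · obtain ⟨δ, hδ, hdB⟩ := hequi ε hε
    exact ⟨δ, hδ, fun x hx y hy => hdB x (hMM₀ hx) y (hMM₀ hy)⟩

end MeanEquicontinuity

theorem stmt19_general {d : ℕ}
    [MetricSpace X] [BoundedSpace X] [MeasurableSpace X] [BorelSpace X]
    (T : (Fin d → ℤ) → X → X)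
    (hTadd : ∀ i j, T (i + j) = T i ∘ T j)
    (μ : Measure X) [IsProbabilityMeasure μ]
    (hT : ∀ j, MeasurePreserving (T j) μ μ)
    (hm : MuMeanEquicont μ T) {f : X → ℂ} (hf : Measurable f) :
    MuFMeanEquicont μ T f := by
  intro τ hτ
  have hτ2 : ENNReal.ofReal (τ / 2) ≠ 0 := (ENNReal.ofReal_pos.2 (half_pos hτ)).ne'
  obtain ⟨Z, hZ, hμZ, hvisits⟩ :=
    exists_measurableSet_forall_upperDensity_compl_le hTadd hT hm.isTightMeasureSet hf hτ2
  obtain ⟨M, hM, hMZ, hμM, hequi⟩ := hm.exists_isCompact_disjoint hτ hZ hμZ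
  have hgood : ∀ x ∈ M, x ∉ Z := fun _ hx => Set.disjoint_left.1 hMZ hx
  refine ⟨M, hM, hμM, fun ε hε => ?_⟩
  obtain ⟨K, hK, hfK, hKvisits⟩ := hvisits (ε / 4) (by positivity)
  obtain ⟨r, hr, hfr⟩ :=
    Metric.uniformContinuousOn_iff.1 (hK.uniformContinuousOn_of_continuous hfK) ε hε
  obtain ⟨δ, hδ, hdB⟩ := hequi (r * (ε / 4)) (by positivity)
  exact ⟨δ, hδ, fun x hx y hy hxy => rhoF_le_of_dB_le hr hε hfr
    (hKvisits x (hgood x hx)) (hKvisits y (hgood y hy)) (hdB x hx y hy hxy)⟩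

/-- if a TDS with an ergodic invariant measure `μ` is `μ`-mean
equicontinuous, then it is `μ-1_B`-mean equicontinuous for every Borel set `B`. -/
theorem stmt19 {d : ℕ}
    [MetricSpace X] [CompactSpace X] [MeasurableSpace X] [BorelSpace X]
    (T : (Fin d → ℤ) → X → X)
    (hTc : ∀ j, Continuous (T j))
    (hTadd : ∀ i j, T (i + j) = T i ∘ T j)
    (μ : Measure X) [IsProbabilityMeasure μ]
    (hT : ∀ j, MeasurePreserving (T j) μ μ)
    (herg : ∀ A : Set X, MeasurableSet A → (∀ j, T j ⁻¹' A = A) → μ A = 0 ∨ μ A = 1)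
    (hm : MuMeanEquicont μ T) :
    ∀ B : Set X, MeasurableSet B →
      MuFMeanEquicont μ T (B.indicator fun _ => (1 : ℂ)) := by
  intro B hB
  exact stmt19_general T hTadd μ hT hm (measurable_const.indicator hB)
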